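/- arXiv:1210.3303 — 8 statements merged into one kernel-verified Lean document; each statement's English description precedes it below -/
import Mathlib

section
/- In a real normed vector space, for points a, b and radii r, s > 0, the convex hull of the union of the open ball of radius r centered at a and the open ball of radius s centered at b equals the union over t ∈ [0,1] of the open balls of radius (1−t)·r + t·s centered at a + t·(b − a). -/
/-!
The balls are convex and nonempty, so the hull of their union is the union of the segments joining
them. Fixing the ratio `t` instead of the endpoints turns this into a union of Minkowski
combinations `(1 - t) • ball a r + t • ball b s`, and each of these is again a ball: nonnegative
combinations of balls combine the centers and the radii.
-/

open Metric Set
open scoped Pointwise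

theorem convexJoin_eq_iUnion_smul_add_smul {𝕜 E : Type*} [Ring 𝕜] [PartialOrder 𝕜]
    [AddRightMono 𝕜] [AddCommGroup E] [Module 𝕜 E] (s t : Set E) :
    convexJoin 𝕜 s t = ⋃ c ∈ Icc (0 : 𝕜) 1, ((1 - c) • s + c • t) := by
  ext z
  simp only [mem_convexJoin, segment_eq_image, mem_image, mem_iUnion₂, mem_add, mem_smul_set]
  constructor
  · rintro ⟨x, hx, y, hy, c, hc, rfl⟩
    exact ⟨c, hc, _, ⟨x, hx, rfl⟩, _, ⟨y, hy, rfl⟩, rfl⟩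
  · rintro ⟨c, hc, _, ⟨x, hx, rfl⟩, _, ⟨y, hy, rfl⟩, rfl⟩
    exact ⟨x, hx, y, hy, c, hc, rfl⟩

section SeminormedSpace

variable {E : Type*} [SeminormedAddCommGroup E] [NormedSpace ℝ E]

theorem smul_ball_of_pos {α : ℝ} (hα : 0 < α) (a : E) (r : ℝ) :
    α • ball a r = ball (α • a) (α * r) := by
  rw [_root_.smul_ball hα.ne', Real.norm_of_nonneg hα.le]

theorem smul_ball_add_smul_ball {α β r s : ℝ} (hα : 0 ≤ α) (hβ : 0 ≤ β) (hαβ : 0 < α + β)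
    (hr : 0 < r) (hs : 0 < s) (a b : E) :
    α • ball a r + β • ball b s = ball (α • a + β • b) (α * r + β * s) := by
  rcases hα.eq_or_lt with rfl | hα
  · have hβ : 0 < β := by simpa only [zero_add] using hαβ
    simp [zero_smul_set (nonempty_ball.2 hr), smul_ball_of_pos hβ]
  rcases hβ.eq_or_lt with rfl | hβ
  · simp [zero_smul_set (nonempty_ball.2 hs), smul_ball_of_pos hα]
  rw [smul_ball_of_pos hα, smul_ball_of_pos hβ, ball_add_ball (mul_pos hα hr) (mul_pos hβ hs)]

theorem stmt_1_general (a b : E) {r s : ℝ} (hr : 0 < r) (hs : 0 < s) :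
    convexHull ℝ (ball a r ∪ ball b s) =
      ⋃ t ∈ Icc (0 : ℝ) 1, ball (a + t • (b - a)) ((1 - t) * r + t * s) := by
  rw [(convex_ball a r).convexHull_union (convex_ball b s) (nonempty_ball.2 hr)
    (nonempty_ball.2 hs), convexJoin_eq_iUnion_smul_add_smul]
  refine iUnion₂_congr fun t ht ↦ ?_
  have center_eq : (1 - t) • a + t • b = a + t • (b - a) := by module
  rw [smul_ball_add_smul_ball (sub_nonneg.2 ht.2) ht.1 (by simp) hr hs, center_eq]

end SeminormedSpace

theorem stmt_1 {E : Type*} [NormedAddCommGroup E] [NormedSpace ℝ E]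
    (a b : E) (r s : ℝ) (hr : 0 < r) (hs : 0 < s) :
    convexHull ℝ (Metric.ball a r ∪ Metric.ball b s) =
      ⋃ t ∈ Set.Icc (0 : ℝ) 1, Metric.ball (a + t • (b - a)) ((1 - t) * r + t * s) :=
  stmt_1_general a b hr hs
end

section
/- For every ε ≥ 0, the supremum over x ∈ S_ε of the distance infDist(x, S_εᶜ) from x to the complement of S_ε equals 1+ε; equivalently, the inradius of S_ε is 1+ε, so that the quantity Λ = (sup{r : some ball of radius r is contained in S_ε})⁻¹ equals 1/(1+ε). -/
/-- The point `(a, b)` in the Euclidean plane. -/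
noncomputable def pt (a b : ℝ) : EuclideanSpace ℝ (Fin 2) :=
  (WithLp.equiv 2 (Fin 2 → ℝ)).symm ![a, b]

/-- For `ε ≥ 0`, the set `S ε` is the convex hull of the union of the open ball of radius
`1 + ε` centered at `(-1, 0)` and the open ball of radius `1` centered at `(1, 0)`. -/
noncomputable def S (ε : ℝ) : Set (EuclideanSpace ℝ (Fin 2)) :=
  convexHull ℝ (Metric.ball (pt (-1) 0) (1 + ε) ∪ Metric.ball (pt 1 0) 1)

/-!
In dimension at least two, some nonzero continuous linear functional `f` takes the same value at
the centers of both balls. The larger radius being `R`, both balls lie in the slab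
`{x | |f x - f a| ≤ ‖f‖ * R}`, hence so does their convex hull, and no ball of radius greater than
`R` fits into that slab.
-/

open Metric

section Metric

variable {X : Type*} [PseudoMetricSpace X] {s : Set X}

/-- The set whose supremum is the inradius of `s`: all `r` such that some open ball of radius `r`
is contained in `s`. Balls of nonpositive radius are empty, so every `r ≤ 0` belongs to it as soon
as the space is nonempty. -/
def inscribedRadii (s : Set X) : Set ℝ :=
  {r | ∃ x, ball x r ⊆ s}

theorem ball_subset_iff_le_infDist_compl (hs : sᶜ.Nonempty) {x : X} {r : ℝ} :
    ball x r ⊆ s ↔ r ≤ infDist x sᶜ := by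
  refine ⟨fun h => (le_infDist hs).2 fun y hy => ?_,
    fun h => (ball_subset_ball h).trans ball_infDist_compl_subset⟩
  exact not_lt.1 fun hlt => hy (h (mem_ball'.2 hlt))

theorem nonempty_compl_of_isGreatest_inscribedRadii {R : ℝ}
    (h : IsGreatest (inscribedRadii s) R) : sᶜ.Nonempty := by
  obtain ⟨x, -⟩ := h.1
  rw [Set.nonempty_compl]
  rintro rfl
  exact (h.2 ⟨x, Set.subset_univ (ball x (R + 1))⟩).not_gt (lt_add_one R)

theorem isGreatest_image_infDist_compl {R : ℝ} (h : IsGreatest (inscribedRadii s) R)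
    (hR : 0 < R) : IsGreatest ((fun x => infDist x sᶜ) '' s) R := by
  have infDist_le (x : X) : infDist x sᶜ ≤ R := h.2 ⟨x, ball_infDist_compl_subset⟩
  obtain ⟨x, hx⟩ := h.1
  have le_infDist_center : R ≤ infDist x sᶜ :=
    (ball_subset_iff_le_infDist_compl (nonempty_compl_of_isGreatest_inscribedRadii h)).1 hx
  exact ⟨⟨x, hx (mem_ball_self hR), (infDist_le x).antisymm le_infDist_center⟩,
    Set.forall_mem_image.2 fun y _ => infDist_le y⟩

end Metric

section Slab

variable {E F : Type*} [NormedAddCommGroup E] [NormedSpace ℝ E]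
  [SeminormedAddCommGroup F] [NormedSpace ℝ F] {f : E →L[ℝ] F} {s : Set E} {t : F} {R δ : ℝ}

theorem ball_subset_preimage_closedBall_opNorm_mul (f : E →L[ℝ] F) (x : E) (r : ℝ) :
    ball x r ⊆ f ⁻¹' closedBall (f x) (‖f‖ * r) :=
  ball_subset_closedBall.trans (f.lipschitz.mapsTo_closedBall x r)

theorem opNorm_mul_le_of_ball_subset_preimage_closedBall (hδ : 0 ≤ δ) {x : E} {r : ℝ}
    (h : ball x r ⊆ f ⁻¹' closedBall t δ) : ‖f‖ * r ≤ δ := by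
  by_contra! hlt
  have hr : 0 < r := pos_of_mul_pos_right (hδ.trans_lt hlt) (norm_nonneg f)
  have div_lt_opNorm : δ / r < ‖f‖ := (div_lt_iff₀ hr).2 hlt
  obtain ⟨v, hv, hfv⟩ := f.exists_lt_apply_of_lt_opNorm div_lt_opNorm
  have norm_smul_lt : ‖r • v‖ < r := by
    rw [norm_smul, Real.norm_of_nonneg hr.le]
    exact mul_lt_of_lt_one_right hr hv
  have dist_add : dist (f (x + r • v)) t ≤ δ :=
    h (by simpa only [mem_ball, dist_self_add_left] using norm_smul_lt)
  have dist_sub : dist (f (x - r • v)) t ≤ δ :=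
    h (by simpa only [mem_ball, dist_self_sub_left] using norm_smul_lt)
  have dist_add_sub : dist (f (x + r • v)) (f (x - r • v)) = 2 * (‖f v‖ * r) := by
    rw [dist_eq_norm, ← map_sub, add_sub_sub_cancel, ← two_smul ℝ, map_smul, map_smul, norm_smul,
      norm_smul, Real.norm_of_nonneg hr.le, Real.norm_two, mul_comm r]
  have dist_le : dist (f (x + r • v)) (f (x - r • v)) ≤ δ + δ :=
    (dist_triangle_right _ _ t).trans (add_le_add dist_add dist_sub)
  have lt_norm_mul : δ < ‖f v‖ * r := (div_lt_iff₀ hr).1 hfv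
  rw [dist_add_sub] at dist_le
  linarith

theorem isGreatest_inscribedRadii_of_subset_preimage_closedBall (hf : 0 < ‖f‖) (hR : 0 ≤ R)
    {c : E} (hball : ball c R ⊆ s) (hs : s ⊆ f ⁻¹' closedBall t (‖f‖ * R)) :
    IsGreatest (inscribedRadii s) R := by
  refine ⟨⟨c, hball⟩, fun r ⟨x, hx⟩ => ?_⟩
  exact le_of_mul_le_mul_left
    (opNorm_mul_le_of_ball_subset_preimage_closedBall (by positivity) (hx.trans hs)) hf

theorem convexHull_union_ball_subset_preimage_closedBall {a b : E} (hab : f a = f b) {r : ℝ}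
    (hr : r ≤ R) :
    convexHull ℝ (ball a R ∪ ball b r) ⊆ f ⁻¹' closedBall (f a) (‖f‖ * R) := by
  refine convexHull_min (Set.union_subset ?_ ?_)
    ((convex_closedBall (f a) (‖f‖ * R)).linear_preimage f.toLinearMap)
  · exact ball_subset_preimage_closedBall_opNorm_mul f a R
  · rw [hab]
    exact (ball_subset_ball hr).trans (ball_subset_preimage_closedBall_opNorm_mul f b R)

end Slab

section TwoBalls

variable {E : Type*} [NormedAddCommGroup E] [NormedSpace ℝ E]

theorem exists_strongDual_ne_zero_forall_mem_eq_zero (p : Submodule ℝ E)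
    [IsClosed (p : Set E)] (hp : p ≠ ⊤) :
    ∃ f : StrongDual ℝ E, f ≠ 0 ∧ ∀ x ∈ p, f x = 0 := by
  have : Nontrivial (E ⧸ p) := Submodule.Quotient.nontrivial_iff.2 hp
  obtain ⟨g, hg⟩ := exists_ne (0 : StrongDual ℝ (E ⧸ p))
  refine ⟨g.comp p.mkQL, fun h => hg ?_, fun x hx => ?_⟩
  · ext y
    obtain ⟨x, rfl⟩ := p.mkQ_surjective y
    exact DFunLike.congr_fun h x
  · simp [(Submodule.Quotient.mk_eq_zero p).2 hx]

theorem exists_strongDual_ne_zero_apply_eq (hE : 1 < Module.rank ℝ E) (a b : E) :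
    ∃ f : StrongDual ℝ E, f ≠ 0 ∧ f a = f b := by
  have span_ne_top : Submodule.span ℝ {a - b} ≠ ⊤ := fun h => by
    have rank_le := rank_span_le (R := ℝ) {a - b}
    rw [h, rank_top, Cardinal.mk_singleton] at rank_le
    exact rank_le.not_gt hE
  have : IsClosed (Submodule.span ℝ {a - b} : Set E) := Submodule.closed_of_finiteDimensional _
  obtain ⟨f, hf, hfab⟩ := exists_strongDual_ne_zero_forall_mem_eq_zero _ span_ne_top
  refine ⟨f, hf, sub_eq_zero.1 ?_⟩
  rw [← map_sub]
  exact hfab _ (Submodule.mem_span_singleton_self _)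

theorem isGreatest_inscribedRadii_convexHull_union_ball (hE : 1 < Module.rank ℝ E) (a b : E)
    {r R : ℝ} (hR : 0 ≤ R) (hr : r ≤ R) :
    IsGreatest (inscribedRadii (convexHull ℝ (ball a R ∪ ball b r))) R := by
  obtain ⟨f, hf, hab⟩ := exists_strongDual_ne_zero_apply_eq hE a b
  exact isGreatest_inscribedRadii_of_subset_preimage_closedBall (norm_pos_iff.2 hf) hR
    (Set.subset_union_left.trans (subset_convexHull ℝ _))
    (convexHull_union_ball_subset_preimage_closedBall hab hr)

theorem stmt_4_general (hE : 1 < Module.rank ℝ E) (a b : E) {r R : ℝ} (hR : 0 < R) (hr : r ≤ R) :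
    sSup ((fun x => infDist x (convexHull ℝ (ball a R ∪ ball b r))ᶜ) ''
        convexHull ℝ (ball a R ∪ ball b r)) = R ∧
      sSup (inscribedRadii (convexHull ℝ (ball a R ∪ ball b r))) = R ∧
      (sSup (inscribedRadii (convexHull ℝ (ball a R ∪ ball b r))))⁻¹ = 1 / R := by
  have inradius := isGreatest_inscribedRadii_convexHull_union_ball hE a b hR.le hr
  exact ⟨(isGreatest_image_infDist_compl inradius hR).csSup_eq, inradius.csSup_eq, by
    rw [inradius.csSup_eq, one_div]⟩

end TwoBalls

theorem stmt_4 (ε : ℝ) (hε : 0 ≤ ε) :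
    sSup ((fun x => Metric.infDist x (S ε)ᶜ) '' S ε) = 1 + ε ∧
      sSup {r : ℝ | ∃ x : EuclideanSpace ℝ (Fin 2), Metric.ball x r ⊆ S ε} = 1 + ε ∧
      (sSup {r : ℝ | ∃ x : EuclideanSpace ℝ (Fin 2), Metric.ball x r ⊆ S ε})⁻¹ = 1 / (1 + ε) :=
  stmt_4_general (Module.lt_rank_of_lt_finrank (by simp)) (pt (-1) 0) (pt 1 0)
    (by positivity) (by linarith)
end

section
/- For every ε ≥ 0, the open ball of radius 1+ε centered at (-1,0) is contained in S_ε, and the distance from the point (-1,0) to the complement of S_ε equals 1+ε; that is, infDist((-1,0), S_εᶜ) = 1+ε. -/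
/-!
Let `c - c'` be a nonnegative multiple of the unit vector `u`, and let `f` be a linear functional of
norm `1` with `f u = 1`. If `r' ≤ r + dist c c'`, the balls `ball c r` and `ball c' r'` both lie in
the open half-space `f x < f c + r`, hence so does their convex hull. So `c + r • u`, which is at
distance `r` from `c`, is outside the hull, and no point outside the hull is closer because
`ball c r` is inside.
-/

open Metric

lemma infDist_compl_eq_dist_of_ball_subset {X : Type*} [PseudoMetricSpace X] {x y : X} {s : Set X}
    (hs : ball x (dist x y) ⊆ s) (hy : y ∉ s) : infDist x sᶜ = dist x y := by
  refine le_antisymm (infDist_le_dist_of_mem hy) ((le_infDist ⟨y, hy⟩).2 fun z hz ↦ ?_)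
  exact not_lt.1 fun hlt ↦ hz (hs (mem_ball'.2 hlt))

lemma exists_norm_eq_one_and_eq_norm_smul {E : Type*} [NormedAddCommGroup E] [NormedSpace ℝ E]
    [Nontrivial E] (x : E) : ∃ u : E, ‖u‖ = 1 ∧ x = ‖x‖ • u := by
  rcases eq_or_ne x 0 with rfl | hx
  · obtain ⟨u, hu⟩ := exists_norm_eq E zero_le_one
    exact ⟨u, hu, by simp⟩
  · exact ⟨‖x‖⁻¹ • x, norm_smul_inv_norm hx, (smul_inv_smul₀ (norm_ne_zero_iff.2 hx) x).symm⟩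

section HalfSpace

variable {E : Type*} [SeminormedAddCommGroup E] [NormedSpace ℝ E] {f : E →L[ℝ] ℝ}

lemma ball_subset_halfSpace_lt (hf : ‖f‖ ≤ 1) (c : E) (r : ℝ) :
    ball c r ⊆ {x | f x < f c + r} := fun x hx ↦ by
  have hsub : f x - f c < r :=
    calc f x - f c = f (x - c) := (map_sub f x c).symm
      _ ≤ ‖f (x - c)‖ := Real.le_norm_self _
      _ ≤ ‖x - c‖ := f.le_of_opNorm_le hf (x - c) |>.trans_eq (one_mul _)
      _ < r := mem_ball_iff_norm.1 hx
  exact sub_lt_iff_lt_add'.1 hsub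

lemma convexHull_ball_union_ball_subset_halfSpace_lt (hf : ‖f‖ ≤ 1) {c c' : E} {r r' : ℝ}
    (h : f c' + r' ≤ f c + r) :
    convexHull ℝ (ball c r ∪ ball c' r') ⊆ {x | f x < f c + r} := by
  refine convexHull_min (Set.union_subset (ball_subset_halfSpace_lt hf c r) ?_)
    (convex_halfSpace_lt f.isLinear _)
  exact fun x hx ↦ (ball_subset_halfSpace_lt hf c' r' hx).trans_le h

end HalfSpace

theorem stmt_5_general {E : Type*} [NormedAddCommGroup E] [NormedSpace ℝ E] [Nontrivial E]
    {c c' : E} {r r' : ℝ} (hr : 0 ≤ r) (hr' : r' ≤ r + dist c c') :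
    ball c r ⊆ convexHull ℝ (ball c r ∪ ball c' r') ∧
      infDist c (convexHull ℝ (ball c r ∪ ball c' r'))ᶜ = r := by
  have hball : ball c r ⊆ convexHull ℝ (ball c r ∪ ball c' r') :=
    Set.subset_union_left.trans (subset_convexHull ℝ _)
  obtain ⟨u, hu, hcu⟩ := exists_norm_eq_one_and_eq_norm_smul (c - c')
  obtain ⟨f, hf, hfu⟩ : ∃ f : E →L[ℝ] ℝ, ‖f‖ = 1 ∧ f u = 1 := by
    simpa [hu] using exists_dual_vector ℝ u (by simp [hu])
  have hfc : f c - f c' = dist c c' := by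
    rw [← map_sub, hcu, map_smul, hfu, smul_eq_mul, mul_one, dist_eq_norm]
  have hdist : dist c (c + r • u) = r := by
    rw [dist_self_add_right, norm_smul, hu, mul_one, Real.norm_of_nonneg hr]
  have hout : c + r • u ∉ convexHull ℝ (ball c r ∪ ball c' r') := fun hmem ↦ by
    have hlt : f (c + r • u) < f c + r :=
      convexHull_ball_union_ball_subset_halfSpace_lt hf.le (by linarith) hmem
    simp [hfu] at hlt
  have hinf := infDist_compl_eq_dist_of_ball_subset (by rwa [hdist]) hout
  exact ⟨hball, hinf.trans hdist⟩

theorem stmt_5 (ε : ℝ) (hε : 0 ≤ ε) :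
    Metric.ball (pt (-1) 0) (1 + ε) ⊆ S ε ∧
      Metric.infDist (pt (-1) 0) (S ε)ᶜ = 1 + ε :=
  stmt_5_general (by positivity) (by linarith [dist_nonneg (x := pt (-1) 0) (y := pt 1 0)])
end

section
/- For every ε > 0, the high ridge of S_ε is the single point (-1,0); that is, {x ∈ S_ε : infDist(x, S_εᶜ) = 1+ε} = {(-1,0)}. Equivalently, for every x ∈ S_ε with x ≠ (-1,0) one has infDist(x, S_εᶜ) < 1+ε. -/
/-!
A half-space tangent to the larger ball, with outer unit normal `u`, contains the convex hull of
both balls as soon as the component of `c₂ - c₁` along `u` is at most `r₁ - r₂`, where `c₁`, `r₁`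
belong to the larger ball. The distance from a point `x` of the hull to the complement is then at
most the distance from `x` to the tangent hyperplane, which is smaller than `r₁` when `u` makes an
acute angle with `x - c₁`. Because `r₁ - r₂` is positive, the constraint on `u` still holds when a
normal to the segment of centres is slightly tilted towards `x - c₁`, so such a `u` exists for every
`x ≠ c₁`.
-/

section HighRidge

open Metric Topology
open scoped RealInnerProductSpace

variable {E : Type*} [NormedAddCommGroup E] [InnerProductSpace ℝ E]

theorem ball_subset_inner_lt {u : E} (hu : ‖u‖ = 1) (c : E) (r : ℝ) :
    ball c r ⊆ {y | ⟪u, y⟫ < ⟪u, c⟫ + r} := fun y hy ↦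
  calc ⟪u, y⟫ = ⟪u, c⟫ + ⟪u, y - c⟫ := by rw [inner_sub_right]; ring
    _ ≤ ⟪u, c⟫ + ‖u‖ * ‖y - c‖ := by gcongr; exact real_inner_le_norm u (y - c)
    _ < ⟪u, c⟫ + r := by rw [hu, one_mul, ← dist_eq_norm]; gcongr; exact mem_ball.1 hy

theorem convexHull_ball_union_ball_subset_inner_lt {u c₁ c₂ : E} {r₁ r₂ : ℝ} (hu : ‖u‖ = 1)
    (h : ⟪u, c₂ - c₁⟫ ≤ r₁ - r₂) :
    convexHull ℝ (ball c₁ r₁ ∪ ball c₂ r₂) ⊆ {y | ⟪u, y⟫ < ⟪u, c₁⟫ + r₁} := by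
  have offset_le : ⟪u, c₂⟫ + r₂ ≤ ⟪u, c₁⟫ + r₁ := by
    rw [inner_sub_right] at h
    linarith
  refine convexHull_min (Set.union_subset (ball_subset_inner_lt hu c₁ r₁) ?_)
    (convex_halfSpace_lt (innerₛₗ ℝ u).isLinear _)
  exact fun y hy ↦ (ball_subset_inner_lt hu c₂ r₂ hy).trans_le offset_le

theorem add_smul_notMem_of_subset_inner_lt {Ω : Set E} {u : E} {b : ℝ} (hu : ‖u‖ = 1)
    (hΩ : Ω ⊆ {y | ⟪u, y⟫ < b}) (x : E) : x + (b - ⟪u, x⟫) • u ∉ Ω := fun hx ↦ by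
  have inner_eq : ⟪u, x + (b - ⟪u, x⟫) • u⟫ = b := by
    rw [inner_add_right, real_inner_smul_right, real_inner_self_eq_norm_sq, hu]
    ring
  exact (hΩ hx).ne inner_eq

theorem infDist_compl_le_of_subset_inner_lt {Ω : Set E} {u x : E} {b : ℝ} (hu : ‖u‖ = 1)
    (hΩ : Ω ⊆ {y | ⟪u, y⟫ < b}) (hx : ⟪u, x⟫ ≤ b) : infDist x Ωᶜ ≤ b - ⟪u, x⟫ :=
  calc infDist x Ωᶜ ≤ dist x (x + (b - ⟪u, x⟫) • u) :=
        infDist_le_dist_of_mem (add_smul_notMem_of_subset_inner_lt hu hΩ x)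
    _ = b - ⟪u, x⟫ := by
        rw [dist_self_add_right, norm_smul, hu, mul_one, Real.norm_of_nonneg (sub_nonneg.2 hx)]

theorem infDist_compl_eq_of_ball_subset_of_subset_inner_lt {Ω : Set E} {u c : E} {r : ℝ}
    (hr : 0 ≤ r) (hu : ‖u‖ = 1) (hball : ball c r ⊆ Ω) (hΩ : Ω ⊆ {y | ⟪u, y⟫ < ⟪u, c⟫ + r}) :
    infDist c Ωᶜ = r := by
  apply le_antisymm
  · simpa using infDist_compl_le_of_subset_inner_lt hu hΩ (le_add_of_nonneg_right hr)
  · refine (le_infDist ⟨_, add_smul_notMem_of_subset_inner_lt hu hΩ c⟩).2 fun y hy ↦ ?_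
    by_contra! hlt
    exact hy (hball (mem_ball'.2 hlt))

theorem exists_ne_zero_inner_eq_zero (hE : 1 < Module.rank ℝ E) (w : E) :
    ∃ n : E, n ≠ 0 ∧ ⟪n, w⟫ = 0 := by
  have span_ne_top : ℝ ∙ w ≠ ⊤ := fun h ↦ by
    have : Module.rank ℝ (ℝ ∙ w) ≤ 1 := (rank_span_le _).trans (Cardinal.mk_singleton w).le
    rw [h, rank_top] at this
    exact hE.not_ge this
  obtain ⟨n, hn, hn0⟩ := Submodule.exists_mem_ne_zero_of_ne_bot
    (mt Submodule.orthogonal_eq_bot_iff.1 span_ne_top)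
  exact ⟨n, hn0, Submodule.mem_orthogonal_singleton_iff_inner_left.1 hn⟩

theorem exists_norm_eq_one_inner_pos_inner_lt (hE : 1 < Module.rank ℝ E) {v : E} (hv : v ≠ 0)
    (w : E) {δ : ℝ} (hδ : 0 < δ) : ∃ u : E, ‖u‖ = 1 ∧ 0 < ⟪u, v⟫ ∧ ⟪u, w⟫ < δ := by
  obtain ⟨n, hn, hnw, hnv⟩ : ∃ n : E, n ≠ 0 ∧ ⟪n, w⟫ = 0 ∧ 0 ≤ ⟪n, v⟫ := by
    obtain ⟨n, hn, hnw⟩ := exists_ne_zero_inner_eq_zero hE w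
    rcases le_total 0 ⟪n, v⟫ with h | h
    · exact ⟨n, hn, hnw, h⟩
    · exact ⟨-n, neg_ne_zero.2 hn, by simp [hnw], by simpa using h⟩
  obtain ⟨t, hu_lt, ht⟩ : ∃ t : ℝ, ⟪n + t • v, w⟫ < δ * ‖n + t • v‖ ∧ 0 < t := by
    have near_zero : ∀ᶠ t : ℝ in 𝓝 0, ⟪n + t • v, w⟫ < δ * ‖n + t • v‖ := by
      refine ContinuousAt.eventually_lt (by fun_prop) (by fun_prop) ?_
      simpa [hnw] using mul_pos hδ (norm_pos_iff.2 hn)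
    exact ((near_zero.filter_mono nhdsWithin_le_nhds).and self_mem_nhdsWithin).exists
      (f := 𝓝[>] 0)
  have inner_pos : 0 < ⟪n + t • v, v⟫ := by
    rw [inner_add_left, real_inner_smul_left]
    exact add_pos_of_nonneg_of_pos hnv (mul_pos ht (real_inner_self_pos.2 hv))
  have norm_pos : 0 < ‖n + t • v‖ := norm_pos_iff.2 fun h ↦ by simp [h] at inner_pos
  refine ⟨‖n + t • v‖⁻¹ • (n + t • v), ?_, ?_, ?_⟩
  · exact norm_smul_inv_norm (𝕜 := ℝ) (norm_pos_iff.1 norm_pos)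
  · rw [real_inner_smul_left]
    positivity
  · rwa [real_inner_smul_left, inv_mul_lt_iff₀ norm_pos, mul_comm]

theorem infDist_compl_convexHull_ball_union_ball_lt (hE : 1 < Module.rank ℝ E) {c₁ c₂ x : E}
    {r₁ r₂ : ℝ} (hr : r₂ < r₁) (hx : x ∈ convexHull ℝ (ball c₁ r₁ ∪ ball c₂ r₂)) (hne : x ≠ c₁) :
    infDist x (convexHull ℝ (ball c₁ r₁ ∪ ball c₂ r₂))ᶜ < r₁ := by
  obtain ⟨u, hu, hux, huc⟩ :=
    exists_norm_eq_one_inner_pos_inner_lt hE (sub_ne_zero.2 hne) (c₂ - c₁) (sub_pos.2 hr)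
  have hull_subset := convexHull_ball_union_ball_subset_inner_lt hu huc.le
  have infDist_le := infDist_compl_le_of_subset_inner_lt hu hull_subset (hull_subset hx).le
  rw [inner_sub_right] at hux
  linarith

theorem exists_norm_eq_one_inner_nonpos [Nontrivial E] (w : E) :
    ∃ u : E, ‖u‖ = 1 ∧ ⟪u, w⟫ ≤ 0 := by
  obtain ⟨u, hu⟩ := exists_norm_eq E zero_le_one
  rcases le_total ⟪u, w⟫ 0 with h | h
  · exact ⟨u, hu, h⟩
  · exact ⟨-u, by rwa [norm_neg], by rwa [inner_neg_left, neg_nonpos]⟩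

theorem infDist_center_compl_convexHull_ball_union_ball [Nontrivial E] (c₁ c₂ : E) {r₁ r₂ : ℝ}
    (hr₁ : 0 ≤ r₁) (hr : r₂ ≤ r₁) :
    infDist c₁ (convexHull ℝ (ball c₁ r₁ ∪ ball c₂ r₂))ᶜ = r₁ := by
  obtain ⟨u, hu, huc⟩ := exists_norm_eq_one_inner_nonpos (c₂ - c₁)
  exact infDist_compl_eq_of_ball_subset_of_subset_inner_lt hr₁ hu
    (Set.subset_union_left.trans (subset_convexHull ℝ _))
    (convexHull_ball_union_ball_subset_inner_lt hu (huc.trans (sub_nonneg.2 hr)))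

theorem stmt_6_general (hE : 1 < Module.rank ℝ E) (c₁ c₂ : E) {r₁ r₂ : ℝ} (hr₁ : 0 < r₁)
    (hr : r₂ < r₁) :
    {x ∈ convexHull ℝ (ball c₁ r₁ ∪ ball c₂ r₂) |
        infDist x (convexHull ℝ (ball c₁ r₁ ∪ ball c₂ r₂))ᶜ = r₁} = {c₁} ∧
      ∀ x ∈ convexHull ℝ (ball c₁ r₁ ∪ ball c₂ r₂), x ≠ c₁ →
        infDist x (convexHull ℝ (ball c₁ r₁ ∪ ball c₂ r₂))ᶜ < r₁ := by
  have : Nontrivial E := rank_pos_iff_nontrivial.1 (zero_lt_one.trans hE)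
  refine ⟨Set.eq_singleton_iff_unique_mem.2 ⟨⟨?_, ?_⟩, fun x ⟨hx, infDist_eq⟩ ↦ ?_⟩, fun x ↦
    infDist_compl_convexHull_ball_union_ball_lt hE hr⟩
  · exact subset_convexHull ℝ _ (Or.inl (mem_ball_self hr₁))
  · exact infDist_center_compl_convexHull_ball_union_ball c₁ c₂ hr₁.le hr.le
  · by_contra hne
    exact (infDist_compl_convexHull_ball_union_ball_lt hE hr hx hne).ne infDist_eq

end HighRidge

theorem stmt_6 (ε : ℝ) (hε : 0 < ε) :
    {x ∈ S ε | Metric.infDist x (S ε)ᶜ = 1 + ε} = {pt (-1) 0} ∧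
      ∀ x ∈ S ε, x ≠ pt (-1) 0 → Metric.infDist x (S ε)ᶜ < 1 + ε :=
  stmt_6_general (Module.one_lt_rank_of_one_lt_finrank (by simp)) (pt (-1) 0) (pt 1 0)
    (by positivity) (lt_add_of_pos_right 1 hε)
end

section
/- The high ridge of the stadium S_0 is the closed segment from (-1,0) to (1,0); that is, {x ∈ S_0 : infDist(x, S_0ᶜ) = 1} = {(t,0) : t ∈ [-1,1]}. -/
/-- The closed segment from `(-1, 0)` to `(1, 0)`. -/
noncomputable def L : Set (EuclideanSpace ℝ (Fin 2)) := segment ℝ (pt (-1) 0) (pt 1 0)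

open Bornology Metric Set
open scoped Pointwise

section Cancellation

variable {E : Type*} [AddCommGroup E] [Module ℝ E] [TopologicalSpace E]

theorem bddAbove_image_of_isVonNBounded {B : Set E} (hB : IsVonNBounded ℝ B) (f : E →L[ℝ] ℝ) :
    BddAbove (f '' B) :=
  ((NormedSpace.isVonNBounded_iff ℝ).1 (hB.image f)).bddAbove

/-- Rådström's cancellation law: a functional separating a point of `A` from `closure K` would have
a larger supremum on `A + B` than on `K + B`. -/
theorem subset_closure_of_add_subset_add [IsTopologicalAddGroup E] [ContinuousSMul ℝ E]
    [LocallyConvexSpace ℝ E] {A B K : Set E} (hK : Convex ℝ K) (hB : IsVonNBounded ℝ B)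
    (hB₀ : B.Nonempty) (h : A + B ⊆ K + B) : A ⊆ closure K := by
  intro a ha
  by_contra haK
  obtain ⟨f, u, hfK, hfa⟩ := geometric_hahn_banach_closed_point hK.closure isClosed_closure haK
  obtain ⟨_, ⟨b, hb, rfl⟩, hfb⟩ : ∃ y ∈ f '' B, sSup (f '' B) - (f a - u) < y :=
    exists_lt_of_lt_csSup (hB₀.image f) (sub_lt_self _ (sub_pos.2 hfa))
  obtain ⟨k, hk, b', hb', hsum⟩ := h (add_mem_add ha hb)
  have hfsum : f k + f b' = f a + f b := by simpa only [map_add] using congrArg f hsum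
  have hfk : f k < u := hfK k (subset_closure hk)
  have hfb' : f b' ≤ sSup (f '' B) :=
    le_csSup (bddAbove_image_of_isVonNBounded hB f) (mem_image_of_mem f hb')
  linarith

end Cancellation

section Thickening

variable {E : Type*} [SeminormedAddCommGroup E] [NormedSpace ℝ E] {K s : Set E} {r : ℝ} {x : E}

theorem convexHull_thickening (r : ℝ) (s : Set E) :
    convexHull ℝ (thickening r s) = thickening r (convexHull ℝ s) := by
  rw [← add_ball_zero, convexHull_add, (convex_ball 0 r).convexHull_eq, add_ball_zero]

theorem ball_subset_thickening_iff_mem_closure (hr : 0 < r) (hK : Convex ℝ K) :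
    ball x r ⊆ thickening r K ↔ x ∈ closure K := by
  refine ⟨fun h ↦ ?_, fun hx ↦ thickening_closure (s := K) ▸ ball_subset_thickening hx r⟩
  have hadd : {x} + ball (0 : E) r ⊆ K + ball 0 r := by
    rwa [singleton_add_ball_zero, add_ball_zero]
  exact subset_closure_of_add_subset_add hK ((NormedSpace.isVonNBounded_iff ℝ).2 isBounded_ball)
    (nonempty_ball.2 hr) hadd rfl

theorem compl_thickening_nonempty (hr : 0 < r) (hK : Convex ℝ K) (hK' : closure K ≠ univ) :
    (thickening r K)ᶜ.Nonempty := by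
  obtain ⟨x, hx⟩ := (ne_univ_iff_exists_notMem _).1 hK'
  rw [← ball_subset_thickening_iff_mem_closure hr hK, not_subset] at hx
  exact hx.imp fun _ ↦ And.right

theorem le_infDist_compl_thickening_iff (hr : 0 < r) (hK : Convex ℝ K) (hK' : closure K ≠ univ) :
    r ≤ infDist x (thickening r K)ᶜ ↔ x ∈ closure K := by
  rw [← ball_subset_thickening_iff_mem_closure hr hK]
  refine ⟨fun h ↦ (ball_subset_ball h).trans ball_infDist_compl_subset, fun h ↦ ?_⟩
  refine (le_infDist (compl_thickening_nonempty hr hK hK')).2 fun y hy ↦ ?_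
  exact le_of_not_gt fun hlt ↦ hy (h (mem_ball'.2 hlt))

theorem ball_infDist_compl_thickening_sub_subset (hr : 0 < r) (hK : Convex ℝ K) (x : E) :
    ball x (infDist x (thickening r K)ᶜ - r) ⊆ closure K := by
  intro y hy
  rw [← ball_subset_thickening_iff_mem_closure hr hK]
  have hball : ball y r ⊆ ball x (infDist x (thickening r K)ᶜ) :=
    ball_subset_ball' (by linarith [mem_ball.1 hy])
  exact hball.trans ball_infDist_compl_subset

theorem infDist_compl_thickening_le (hr : 0 < r) (hK : Convex ℝ K)
    (hint : interior (closure K) = ∅) (x : E) : infDist x (thickening r K)ᶜ ≤ r := by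
  by_contra! hlt
  have hx : x ∈ interior (closure K) :=
    interior_maximal (ball_infDist_compl_thickening_sub_subset hr hK x) isOpen_ball
      (mem_ball_self (sub_pos.2 hlt))
  simp [hint] at hx

theorem infDist_compl_thickening_eq_iff (hr : 0 < r) (hK : Convex ℝ K)
    (hint : interior (closure K) = ∅) :
    infDist x (thickening r K)ᶜ = r ↔ x ∈ closure K := by
  have hK' : closure K ≠ univ := fun h ↦ by simp [h] at hint
  rw [← le_infDist_compl_thickening_iff hr hK hK',
    (infDist_compl_thickening_le hr hK hint x).ge_iff_eq]

theorem stmt_7_general (hr : 0 < r) (hint : interior (closedConvexHull ℝ s) = ∅) :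
    {x ∈ convexHull ℝ (thickening r s) | infDist x (convexHull ℝ (thickening r s))ᶜ = r} =
      closedConvexHull ℝ s := by
  rw [closedConvexHull_eq_closure_convexHull] at hint ⊢
  ext x
  rw [mem_ofPred_eq, convexHull_thickening,
    infDist_compl_thickening_eq_iff hr (convex_convexHull ℝ s) hint, and_iff_right_iff_imp]
  exact fun hx ↦ closure_subset_thickening hr _ hx

end Thickening

section Segment

theorem closedConvexHull_pair {E : Type*} [AddCommGroup E] [Module ℝ E] [TopologicalSpace E]
    [IsTopologicalAddGroup E] [ContinuousSMul ℝ E] [T2Space E] (a b : E) :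
    closedConvexHull ℝ {a, b} = segment ℝ a b := by
  have hclosed : IsClosed (convexHull ℝ {a, b}) := (toFinite {a, b}).isClosed_convexHull ℝ
  rw [closedConvexHull_eq_closure_convexHull, hclosed.closure_eq, convexHull_pair]

variable {E : Type*} [NormedAddCommGroup E] [NormedSpace ℝ E]

theorem interior_convexHull_eq_empty_of_collinear {s : Set E} (hE : 1 < Module.rank ℝ E)
    (hs : Collinear ℝ s) : interior (convexHull ℝ s) = ∅ := by
  by_contra! hne
  have hspan : vectorSpan ℝ s = ⊤ :=
    AffineSubspace.vectorSpan_eq_top_of_affineSpan_eq_top ℝ E E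
      (affineSpan_eq_top_of_nonempty_interior hne)
  rw [collinear_iff_rank_le_one, hspan, rank_top] at hs
  exact hs.not_gt hE

theorem interior_closedConvexHull_pair_eq_empty (hE : 1 < Module.rank ℝ E) (a b : E) :
    interior (closedConvexHull ℝ {a, b}) = ∅ := by
  rw [closedConvexHull_pair, ← convexHull_pair]
  exact interior_convexHull_eq_empty_of_collinear hE (collinear_pair ℝ a b)

theorem one_lt_rank_euclideanSpace (ι : Type*) [Finite ι] [Nontrivial ι] :
    1 < Module.rank ℝ (EuclideanSpace ℝ ι) := by
  have := Fintype.ofFinite ι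
  rw [← Module.finrank_eq_rank, finrank_euclideanSpace]
  exact_mod_cast Fintype.one_lt_card

end Segment

theorem S_zero_eq_convexHull_thickening :
    S 0 = convexHull ℝ (thickening 1 {pt (-1) 0, pt 1 0}) := by
  simp only [S, add_zero, thickening_eq_biUnion_ball, biUnion_pair]

theorem image_pt_Icc {a b : ℝ} (hab : a ≤ b) (c : ℝ) :
    (fun t ↦ pt t c) '' Icc a b = segment ℝ (pt a c) (pt b c) := by
  have hline : (fun t ↦ pt t c) = AffineMap.lineMap (k := ℝ) (pt 0 c) (pt 1 c) := by
    ext t i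
    fin_cases i <;> simp [pt, AffineMap.lineMap_apply]
  rw [hline, ← segment_eq_Icc hab, image_segment, ← hline]

theorem stmt_7 :
    {x ∈ S 0 | Metric.infDist x (S 0)ᶜ = 1} = (fun t : ℝ => pt t 0) '' Set.Icc (-1 : ℝ) 1 := by
  rw [S_zero_eq_convexHull_thickening, image_pt_Icc (by norm_num), ← closedConvexHull_pair]
  exact stmt_7_general one_pos
    (interior_closedConvexHull_pair_eq_empty (one_lt_rank_euclideanSpace _) _ _)
end

section
/- For every ε with 0 ≤ ε < 2, the distance from the point (1,0) to the complement of S_ε equals 1; that is, infDist((1,0), S_εᶜ) = 1. -/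
/-! The ball around `b` lies in the convex hull `H` of the balls `B(a, R)` and `B(b, r)`, which
gives the lower bound for the distance from `b` to `Hᶜ`. For the upper bound, let `f` be a
functional of norm at most one with `f (b - a) = ‖b - a‖`. On `B(a, R)` it stays below `f a + R`, on
`B(b, r)` below `f b + r`; if `R ≤ dist a b + r` then the first bound is at most the second, so
`f < f b + r` on all of `H`. The point `p` at distance `r` behind `b` on the ray from `a` through
`b` has `f p = f b + r`, so it is not in `H`. -/

theorem infDist_compl_eq_dist {X : Type*} [PseudoMetricSpace X] {s : Set X} {x y : X}
    (hball : Metric.ball x (dist x y) ⊆ s) (hy : y ∉ s) :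
    Metric.infDist x sᶜ = dist x y := by
  refine le_antisymm (Metric.infDist_le_dist_of_mem hy) ?_
  refine (Metric.le_infDist ⟨y, hy⟩).2 fun z hz => ?_
  by_contra! hlt
  exact hz (hball (Metric.mem_ball'.2 hlt))

theorem ball_subset_openHalfSpace {E : Type*} [SeminormedAddCommGroup E] [NormedSpace ℝ E]
    {f : StrongDual ℝ E} (hf : ‖f‖ ≤ 1) (a : E) (R : ℝ) :
    Metric.ball a R ⊆ {x | f x < f a + R} := by
  intro x hx
  have hxa : f x - f a < R :=
    calc
      f x - f a = f (x - a) := (map_sub f x a).symm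
      _ ≤ ‖f (x - a)‖ := Real.le_norm_self _
      _ ≤ ‖x - a‖ := (f.le_of_opNorm_le hf _).trans_eq (one_mul _)
      _ < R := mem_ball_iff_norm.1 hx
  exact sub_lt_iff_lt_add'.1 hxa

theorem convexHull_balls_subset_openHalfSpace {E : Type*} [SeminormedAddCommGroup E]
    [NormedSpace ℝ E] {f : StrongDual ℝ E} (hf : ‖f‖ ≤ 1) {a b : E} {R r : ℝ}
    (h : f a + R ≤ f b + r) :
    convexHull ℝ (Metric.ball a R ∪ Metric.ball b r) ⊆ {x | f x < f b + r} :=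
  convexHull_min
    (Set.union_subset
      ((ball_subset_openHalfSpace hf a R).trans fun _ hx => lt_of_lt_of_le hx h)
      (ball_subset_openHalfSpace hf b r))
    (convex_halfSpace_lt f.toLinearMap.isLinear _)

theorem stmt_10_general {E : Type*} [SeminormedAddCommGroup E] [NormedSpace ℝ E] {a b : E}
    (hab : dist a b ≠ 0) {R r : ℝ} (hr : 0 ≤ r) (hR : R ≤ dist a b + r) :
    Metric.infDist b (convexHull ℝ (Metric.ball a R ∪ Metric.ball b r))ᶜ = r := by
  obtain ⟨f, hf, hfba⟩ : ∃ f : StrongDual ℝ E, ‖f‖ ≤ 1 ∧ f (b - a) = ‖b - a‖ :=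
    exists_dual_vector'' ℝ (b - a)
  rw [dist_eq_norm'] at hab hR
  let p : E := b + (r / ‖b - a‖) • (b - a)
  have hp_dist : dist b p = r := by
    rw [dist_self_add_right, norm_smul, norm_div, norm_norm, Real.norm_of_nonneg hr,
      div_mul_cancel₀ _ hab]
  have hp_apply : f p = f b + r := by
    rw [map_add, map_smul, hfba, smul_eq_mul, div_mul_cancel₀ _ hab]
  have hab_apply : f a + R ≤ f b + r := by
    rw [map_sub] at hfba
    linarith
  have hp : p ∉ convexHull ℝ (Metric.ball a R ∪ Metric.ball b r) := fun hmem =>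
    (convexHull_balls_subset_openHalfSpace hf hab_apply hmem).ne hp_apply
  have hball : Metric.ball b (dist b p) ⊆ convexHull ℝ (Metric.ball a R ∪ Metric.ball b r) := by
    rw [hp_dist]
    exact Set.subset_union_right.trans (subset_convexHull ℝ _)
  exact (infDist_compl_eq_dist hball hp).trans hp_dist

theorem dist_pt (a b c d : ℝ) : dist (pt a b) (pt c d) = √((a - c) ^ 2 + (b - d) ^ 2) := by
  simp [pt, EuclideanSpace.dist_eq, Real.dist_eq]

theorem stmt_10 (ε : ℝ) (hε0 : 0 ≤ ε) (hε2 : ε < 2) :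
    Metric.infDist (pt 1 0) (S ε)ᶜ = 1 := by
  have hdist : dist (pt (-1) 0) (pt 1 0) = 2 := by
    rw [dist_pt, Real.sqrt_eq_iff_eq_sq] <;> norm_num
  exact stmt_10_general (by norm_num [hdist]) zero_le_one (by linarith)
end

section
/- For every ε ≥ 0, one has the sandwich S_0 ⊆ S_ε ⊆ {x ∈ ℝ² : infDist(x, S_0) < ε} ∪ S_0; that is, S_0 is contained in S_ε, and S_ε is contained in the open ε-neighborhood of S_0 (understood as S_0 itself when ε = 0). -/
section Convex

open Metric

variable {E : Type*} [SeminormedAddCommGroup E] [NormedSpace ℝ E]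

theorem convexHull_thickening_union_subset {δ : ℝ} (hδ : 0 < δ) (s t : Set E) :
    convexHull ℝ (thickening δ s ∪ t) ⊆ thickening δ (convexHull ℝ (s ∪ t)) := by
  have hsub : s ∪ t ⊆ convexHull ℝ (s ∪ t) := subset_convexHull ℝ _
  refine convexHull_min (Set.union_subset ?_ ?_) ((convex_convexHull ℝ _).thickening δ)
  · exact thickening_subset_of_subset δ (Set.subset_union_left.trans hsub)
  · exact (Set.subset_union_right.trans hsub).trans (self_subset_thickening hδ _)

theorem convexHull_ball_add_union_subset_thickening {r δ : ℝ} (hr : 0 < r) (hδ : 0 < δ)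
    (a : E) (t : Set E) :
    convexHull ℝ (ball a (r + δ) ∪ t) ⊆ thickening δ (convexHull ℝ (ball a r ∪ t)) := by
  rw [add_comm, ← thickening_ball hδ hr]
  exact convexHull_thickening_union_subset hδ _ _

theorem stmt_11_general {r ε : ℝ} (hr : 0 < r) (hε : 0 ≤ ε) (a : E) (t : Set E) :
    convexHull ℝ (ball a r ∪ t) ⊆ convexHull ℝ (ball a (r + ε) ∪ t) ∧
      convexHull ℝ (ball a (r + ε) ∪ t) ⊆
        {x | infDist x (convexHull ℝ (ball a r ∪ t)) < ε} ∪ convexHull ℝ (ball a r ∪ t) := by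
  constructor
  · have hball : ball a r ⊆ ball a (r + ε) := ball_subset_ball (le_add_of_nonneg_right hε)
    exact convexHull_mono (Set.union_subset_union_left t hball)
  · rcases hε.eq_or_lt with rfl | hpos
    · rw [add_zero]
      exact Set.subset_union_right
    · intro x hx
      obtain ⟨y, hy, hxy⟩ :=
        mem_thickening_iff.1 (convexHull_ball_add_union_subset_thickening hr hpos a t hx)
      exact Or.inl ((infDist_le_dist_of_mem hy).trans_lt hxy)

end Convex

theorem stmt_11 (ε : ℝ) (hε : 0 ≤ ε) :
    S 0 ⊆ S ε ∧
      S ε ⊆ {x : EuclideanSpace ℝ (Fin 2) | Metric.infDist x (S 0) < ε} ∪ S 0 := by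
  simpa only [S, add_zero] using
    stmt_11_general one_pos hε (pt (-1) 0) (Metric.ball (pt 1 0) 1)
end

section
/- For every ε ≥ 0 and every x ∈ ℝ², the distance functions to the complements of S_ε and of S_0 differ by at most ε: 0 ≤ infDist(x, S_εᶜ) − infDist(x, S_0ᶜ) ≤ ε. In particular, the distance function of S_ε converges uniformly on ℝ² to the distance function of the stadium S_0 as ε → 0. -/
open Filter Metric Set Topology
open scoped Pointwise

lemma tendstoUniformly_of_eventually_forall_dist_le {ι α β : Type*} [PseudoMetricSpace β]
    {l : Filter ι} {F : ι → α → β} {g : α → β} {b : ι → ℝ} (hb : Tendsto b l (𝓝 0))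
    (hF : ∀ᶠ i in l, ∀ x, dist (F i x) (g x) ≤ b i) : TendstoUniformly F g l := by
  rw [Metric.tendstoUniformly_iff]
  intro δ hδ
  filter_upwards [hF, hb.eventually_lt_const hδ] with i hFi hbi x
  rw [dist_comm]
  exact (hFi x).trans_lt hbi

section NormedSpace

variable {E : Type*} [NormedAddCommGroup E] [NormedSpace ℝ E] {A T : Set E} {ε : ℝ}

lemma apply_le_add_mul_norm_of_mem_add_closedBall {f : E →L[ℝ] ℝ} {c : ℝ}
    (hf : ∀ a ∈ A, f a ≤ c) {z : E} (hz : z ∈ A + closedBall 0 ε) : f z ≤ c + ε * ‖f‖ := by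
  obtain ⟨a, ha, b, hb, rfl⟩ := hz
  have hfb : f b ≤ ε * ‖f‖ := calc
    f b ≤ ‖f‖ * ‖b‖ := (le_abs_self _).trans (f.le_opNorm b)
    _ ≤ ‖f‖ * ε := by gcongr; exact mem_closedBall_zero_iff.1 hb
    _ = ε * ‖f‖ := mul_comm _ _
  rw [map_add]
  exact add_le_add (hf a ha) hfb

lemma mul_norm_le_of_forall_apply_le {f : E →L[ℝ] ℝ} {r c : ℝ} (hr : 0 < r)
    (hf : ∀ v ∈ closedBall (0 : E) r, f v ≤ c) : r * ‖f‖ ≤ c := by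
  have habs : ∀ v ∈ closedBall (0 : E) r, ‖f v‖ ≤ c := fun v hv ↦ by
    have hneg : f (-v) ≤ c := hf (-v) (by simpa using hv)
    rw [map_neg] at hneg
    exact abs_le.2 ⟨neg_le.1 hneg, hf v hv⟩
  rw [mul_comm, ← le_div_iff₀ hr]
  exact ContinuousLinearMap.opNorm_bound_of_ball_bound hr c f habs

lemma infDist_compl_le_of_notMem_of_subset_add_closedBall (hA : Convex ℝ A) (hAo : IsOpen A)
    (hε : 0 ≤ ε) (hT : T ⊆ A + closedBall 0 ε) {y : E} (hy : y ∉ A) : infDist y Tᶜ ≤ ε := by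
  by_contra! hlt
  obtain ⟨r, hεr, hr⟩ := exists_between hlt
  have hball : closedBall y r ⊆ A + closedBall 0 ε :=
    (closedBall_subset_ball hr).trans (ball_infDist_compl_subset.trans hT)
  obtain ⟨f, hf⟩ := geometric_hahn_banach_open_point hA hAo hy
  have hr0 : 0 < r := hε.trans_lt hεr
  have hrf : r * ‖f‖ ≤ ε * ‖f‖ := mul_norm_le_of_forall_apply_le hr0 fun v hv ↦ by
    have hyv : y + v ∈ A + closedBall 0 ε := hball (by simpa using hv)
    have hfyv : f (y + v) ≤ f y + ε * ‖f‖ :=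
      apply_le_add_mul_norm_of_mem_add_closedBall (fun a ha ↦ (hf a ha).le) hyv
    rwa [map_add, add_le_add_iff_left] at hfyv
  have hf0 : f ≠ 0 := by
    rintro rfl
    obtain ⟨a, ha, -⟩ := hball (mem_closedBall_self hr0.le)
    exact (hf a ha).false
  exact (le_of_mul_le_mul_right hrf (norm_pos_iff.2 hf0)).not_gt hεr

lemma infDist_compl_le_infDist_compl_add (hA : Convex ℝ A) (hAo : IsOpen A)
    (hAne : Aᶜ.Nonempty) (hε : 0 ≤ ε) (hT : T ⊆ A + closedBall 0 ε) (x : E) :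
    infDist x Tᶜ ≤ infDist x Aᶜ + ε := by
  rw [← sub_le_iff_le_add, le_infDist hAne]
  intro y hy
  have hyT : infDist y Tᶜ ≤ ε :=
    infDist_compl_le_of_notMem_of_subset_add_closedBall hA hAo hε hT hy
  linarith [infDist_le_infDist_add_dist (s := Tᶜ) (x := x) (y := y)]

lemma convexHull_ball_union_subset_add_closedBall (p : E) {r : ℝ} (hr : 0 < r) (B : Set E)
    (hε : 0 ≤ ε) :
    convexHull ℝ (ball p (r + ε) ∪ B) ⊆ convexHull ℝ (ball p r ∪ B) + closedBall 0 ε := by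
  rw [← (convex_closedBall (0 : E) ε).convexHull_eq, ← convexHull_add]
  refine convexHull_mono ?_
  rw [union_add, ball_add_closedBall hr hε, add_zero]
  exact union_subset_union_right _ (subset_add_left _ (mem_closedBall_self hε))

lemma nonempty_compl_convexHull [Nontrivial E] (hA : Bornology.IsBounded A) :
    (convexHull ℝ A)ᶜ.Nonempty := by
  rw [nonempty_compl]
  intro h
  exact NormedSpace.unbounded_univ ℝ E (h ▸ isBounded_convexHull.2 hA)

lemma infDist_compl_convexHull_ball_union_sub_mem_Icc [Nontrivial E] (p : E) {r : ℝ} (hr : 0 < r)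
    {B : Set E} (hBo : IsOpen B) (hB : Bornology.IsBounded B) (hε : 0 ≤ ε) (x : E) :
    infDist x (convexHull ℝ (ball p (r + ε) ∪ B))ᶜ - infDist x (convexHull ℝ (ball p r ∪ B))ᶜ ∈
      Icc 0 ε := by
  have hne : ∀ t, (convexHull ℝ (ball p t ∪ B))ᶜ.Nonempty := fun t ↦
    nonempty_compl_convexHull (isBounded_ball.union hB)
  have hmono : convexHull ℝ (ball p r ∪ B) ⊆ convexHull ℝ (ball p (r + ε) ∪ B) :=
    convexHull_mono (union_subset_union_left _ (ball_subset_ball (le_add_of_nonneg_right hε)))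
  have hle : infDist x (convexHull ℝ (ball p (r + ε) ∪ B))ᶜ ≤
      infDist x (convexHull ℝ (ball p r ∪ B))ᶜ + ε :=
    infDist_compl_le_infDist_compl_add (convex_convexHull ℝ _) (isOpen_ball.union hBo).convexHull
      (hne r) hε (convexHull_ball_union_subset_add_closedBall p hr B hε) x
  exact ⟨sub_nonneg.2 (infDist_le_infDist_of_subset (compl_subset_compl.2 hmono) (hne _)),
    sub_le_iff_le_add'.2 hle⟩

theorem stmt_12_general [Nontrivial E] (p : E) {r : ℝ} (hr : 0 < r) {B : Set E} (hBo : IsOpen B)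
    (hB : Bornology.IsBounded B) :
    (∀ ε : ℝ, 0 ≤ ε → ∀ x : E,
        0 ≤ infDist x (convexHull ℝ (ball p (r + ε) ∪ B))ᶜ -
            infDist x (convexHull ℝ (ball p r ∪ B))ᶜ ∧
          infDist x (convexHull ℝ (ball p (r + ε) ∪ B))ᶜ -
            infDist x (convexHull ℝ (ball p r ∪ B))ᶜ ≤ ε) ∧
      TendstoUniformly (fun (ε : ℝ) (x : E) ↦ infDist x (convexHull ℝ (ball p (r + ε) ∪ B))ᶜ)
        (fun x ↦ infDist x (convexHull ℝ (ball p r ∪ B))ᶜ) (𝓝[≥] 0) := by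
  have hbounds := fun ε (hε : 0 ≤ ε) (x : E) ↦
    infDist_compl_convexHull_ball_union_sub_mem_Icc p hr hBo hB hε x
  refine ⟨hbounds, tendstoUniformly_of_eventually_forall_dist_le
    (tendsto_id.mono_left nhdsWithin_le_nhds) ?_⟩
  filter_upwards [self_mem_nhdsWithin] with ε hε x
  rw [Real.dist_eq, abs_of_nonneg (hbounds ε hε x).1]
  exact (hbounds ε hε x).2

end NormedSpace

theorem stmt_12 :
    (∀ ε : ℝ, 0 ≤ ε → ∀ x : EuclideanSpace ℝ (Fin 2),
        0 ≤ Metric.infDist x (S ε)ᶜ - Metric.infDist x (S 0)ᶜ ∧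
          Metric.infDist x (S ε)ᶜ - Metric.infDist x (S 0)ᶜ ≤ ε) ∧
      TendstoUniformly (fun (ε : ℝ) (x : EuclideanSpace ℝ (Fin 2)) => Metric.infDist x (S ε)ᶜ)
        (fun x => Metric.infDist x (S 0)ᶜ) (nhdsWithin 0 (Set.Ici 0)) := by
  simpa only [S, add_zero] using stmt_12_general (pt (-1) 0) one_pos isOpen_ball isBounded_ball
end
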